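/- Let ω be a nonnegative integrable function on [0,1) belonging to the class D̂ (i.e. ŵ(r) ≤ C·ŵ((1+r)/2) for some C ≥ 1 and all r ∈ [0,1)). Then there exist constants c₁, c₂ > 0 such that for all 0 ≤ s, t < 1: c₁·(1 + ∫_0^{st} dx/(ŵ(x)(1-x))) ≤ 1/(2ω₁) + (1/t)∫_0^t Σ_{n≥1} s^n x^n/(2ω_{2n+1}) dx ≤ c₂·(1 + ∫_0^{st} dx/(ŵ(x)(1-x))), where ω_{2n+1} = ∫_0^1 r^{2n+1}ω(r)dr (with the middle expression interpreted as 1/(2ω₁) when t = 0). -/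

import Mathlib

open MeasureTheory Set

/-- The tail integral of a radial weight. -/
noncomputable def tl (ω : ℝ → ℝ) (r : ℝ) : ℝ := ∫ s in r..1, ω s

/-- The (real-parameter) moments of a radial weight. -/
noncomputable def momR (ω : ℝ → ℝ) (x : ℝ) : ℝ := ∫ r in (0:ℝ)..1, r ^ x * ω r

/-- The restriction to `[0,1)` of the kernel `K^ω_s(t) = (1/t)∫_0^t B^ω_s(x) dx`,
interpreted as `1/(2ω₁)` when `t = 0`. -/
noncomputable def Kker (ω : ℝ → ℝ) (s t : ℝ) : ℝ :=
  if t = 0 then 1 / (2 * momR ω 1)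
  else 1 / (2 * momR ω 1) +
    (1 / t) * ∫ x in (0:ℝ)..t, ∑' n : ℕ, (s ^ (n + 1) * x ^ (n + 1)) / (2 * momR ω (2 * (n:ℝ) + 3))

lemma aux_layer (μ : Measure ℝ) [IsFiniteMeasure μ] (hμ : ∀ᵐ x ∂μ, x ∈ Ico (0:ℝ) 1)
    (C : ℝ) (hC : 1 ≤ C)
    (hd : ∀ r ∈ Ico (0:ℝ) 1, μ.real (Ici r) ≤ C * μ.real (Ici ((1 + r) / 2)))
    (p : ℕ) (hp : p ≠ 0) :
    ∫ x, x ^ p ∂μ ≤ C * ∫ x, x ^ (2 * p) ∂μ := by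
  have hd' : ∀ r : ℝ, 0 ≤ r → μ (Ici r) ≤ ENNReal.ofReal C * μ (Ici ((1 + r) / 2)) := by
    intro r hr
    rcases lt_or_ge r 1 with h | h
    · have := hd r ⟨hr, h⟩
      rw [← ofReal_measureReal (measure_ne_top μ _), ← ofReal_measureReal (measure_ne_top μ _),
        ← ENNReal.ofReal_mul (by linarith)]
      exact ENNReal.ofReal_le_ofReal this
    · have : μ (Ici r) = 0 := by
        refine measure_mono_null ?_ (ae_iff.1 hμ)
        intro x hx
        simp only [mem_Ici] at hx
        simp only [mem_ofPred_eq, mem_Ico, not_and, not_lt]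
        intro _; linarith
      rw [this]; exact zero_le
  have hset : ∀ t : ℝ, 0 < t → ∃ r : ℝ, 0 ≤ r ∧ {x : ℝ | t ≤ (max x 0) ^ p} = Ici r ∧
      {x : ℝ | t ≤ (max (2 * x - 1) 0) ^ p} = Ici ((1 + r) / 2) := by
    intro t ht
    obtain ⟨r, hr, hrt⟩ : ∃ r : ℝ, 0 < r ∧ r ^ p = t :=
      ⟨t ^ ((p:ℝ)⁻¹), by positivity, Real.rpow_inv_natCast_pow ht.le hp⟩
    have key : ∀ x : ℝ, t ≤ (max x 0) ^ p ↔ r ≤ x := by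
      intro x
      rw [← hrt, pow_le_pow_iff_left₀ hr.le (le_max_right _ _) hp, le_max_iff]
      constructor
      · rintro (h | h)
        · exact h
        · linarith
      · exact Or.inl
    refine ⟨r, hr.le, ?_, ?_⟩
    · ext x; simp only [mem_ofPred_eq, mem_Ici, key]
    · ext x; simp only [mem_ofPred_eq, mem_Ici, key]
      constructor <;> intro h <;> linarith
  have hl : ∫⁻ x, ENNReal.ofReal ((max x 0) ^ p) ∂μ ≤
      ENNReal.ofReal C * ∫⁻ x, ENNReal.ofReal ((max (2 * x - 1) 0) ^ p) ∂μ := by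
    rw [lintegral_eq_lintegral_meas_le μ (Filter.Eventually.of_forall fun x => by positivity)
        (by fun_prop),
      lintegral_eq_lintegral_meas_le μ (Filter.Eventually.of_forall fun x => by positivity)
        (by fun_prop), ← lintegral_const_mul' _ _ ENNReal.ofReal_ne_top]
    refine setLIntegral_mono' measurableSet_Ioi ?_
    intro t ht
    obtain ⟨r, hr, h1, h2⟩ := hset t ht
    rw [h1, h2]
    exact hd' r hr
  have hi : ∀ q : ℕ, Integrable (fun x : ℝ => x ^ q) μ := by
    intro q
    refine Integrable.of_bound (by fun_prop) 1 ?_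
    filter_upwards [hμ] with x hx
    rw [Real.norm_of_nonneg (pow_nonneg hx.1 _)]
    exact pow_le_one₀ hx.1 hx.2.le
  have hnn : ∀ q : ℕ, 0 ≤ᵐ[μ] (fun x : ℝ => x ^ q) := by
    intro q
    filter_upwards [hμ] with x hx
    exact pow_nonneg hx.1 _
  rw [← ENNReal.ofReal_le_ofReal_iff (mul_nonneg (by linarith) (integral_nonneg_of_ae (hnn _))),
    ENNReal.ofReal_mul (by linarith), ofReal_integral_eq_lintegral_ofReal (hi _) (hnn _),
    ofReal_integral_eq_lintegral_ofReal (hi _) (hnn _)]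
  calc _ ≤ ∫⁻ x, ENNReal.ofReal ((max x 0) ^ p) ∂μ := by
        refine lintegral_mono_ae ?_
        filter_upwards [hμ] with x hx
        rw [max_eq_left hx.1]
    _ ≤ _ := hl
    _ ≤ _ := by
        refine mul_le_mul' le_rfl ?_
        refine lintegral_mono_ae ?_
        filter_upwards [hμ] with x hx
        refine ENNReal.ofReal_le_ofReal ?_
        rw [pow_mul]
        gcongr
        exact max_le (by nlinarith [sq_nonneg (x - 1)]) (sq_nonneg x)

/-- upper bound of moments -/
lemma aux_mom_le (μ : Measure ℝ) [IsFiniteMeasure μ] (hμ : ∀ᵐ x ∂μ, x ∈ Ico (0:ℝ) 1)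
    (C : ℝ) (hC : 1 ≤ C)
    (hd : ∀ r ∈ Ico (0:ℝ) 1, μ.real (Ici r) ≤ C * μ.real (Ici ((1 + r) / 2)))
    (p : ℕ) (hp : p ≠ 0) (x : ℝ) (hx : x ∈ Ico (0:ℝ) 1) (hxp : C * x ^ p ≤ 1 / 2) :
    ∫ u, u ^ (2 * p + 1) ∂μ ≤ 2 * μ.real (Ici x) := by
  have hi : ∀ q : ℕ, Integrable (fun x : ℝ => x ^ q) μ := by
    intro q
    refine Integrable.of_bound (by fun_prop) 1 ?_
    filter_upwards [hμ] with x hx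
    rw [Real.norm_of_nonneg (pow_nonneg hx.1 _)]
    exact pow_le_one₀ hx.1 hx.2.le
  have hI : ∀ r : ℝ, Integrable ((Ici r).indicator (1 : ℝ → ℝ)) μ := fun r =>
    (integrable_const (1:ℝ)).indicator measurableSet_Ici
  have h1 := aux_layer μ hμ C hC hd p hp
  have h0 : 0 ≤ ∫ u, u ^ (2 * p) ∂μ := integral_nonneg_of_ae (by
    filter_upwards [hμ] with u hu
    exact pow_nonneg hu.1 _)
  have h2 : ∫ u, u ^ (2 * p) ∂μ ≤ μ.real (Ici x) + x ^ p * ∫ u, u ^ p ∂μ := by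
    rw [← integral_indicator_one measurableSet_Ici, ← integral_const_mul,
      ← integral_add (hI x) ((hi p).const_mul _)]
    refine integral_mono_ae (hi _) ((hI x).add ((hi p).const_mul _)) ?_
    filter_upwards [hμ] with u hu
    by_cases h : x ≤ u
    · have : u ^ (2 * p) ≤ 1 := pow_le_one₀ hu.1 hu.2.le
      have h3 : 0 ≤ x ^ p * u ^ p := mul_nonneg (pow_nonneg hx.1 _) (pow_nonneg hu.1 _)
      simp [indicator, h]
      linarith
    · have : u ^ p ≤ x ^ p := pow_le_pow_left₀ hu.1 (by linarith) _
      simp [indicator, h]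
      rw [two_mul, pow_add]
      exact mul_le_mul_of_nonneg_right this (pow_nonneg hu.1 _)
  have h3 : ∫ u, u ^ (2 * p + 1) ∂μ ≤ ∫ u, u ^ (2 * p) ∂μ := by
    refine integral_mono_ae (hi _) (hi _) ?_
    filter_upwards [hμ] with u hu
    exact pow_le_pow_of_le_one hu.1 hu.2.le (by omega)
  have h4 : x ^ p * ∫ u, u ^ p ∂μ ≤ x ^ p * (C * ∫ u, u ^ (2 * p) ∂μ) :=
    mul_le_mul_of_nonneg_left h1 (pow_nonneg hx.1 _)
  have h5 := mul_le_mul_of_nonneg_right hxp h0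
  nlinarith

lemma aux_le_mom (μ : Measure ℝ) [IsFiniteMeasure μ] (hμ : ∀ᵐ x ∂μ, x ∈ Ico (0:ℝ) 1)
    (q : ℕ) (r : ℝ) (hr : 0 ≤ r) : r ^ q * μ.real (Ici r) ≤ ∫ u, u ^ q ∂μ := by
  have hi : ∀ q : ℕ, Integrable (fun x : ℝ => x ^ q) μ := by
    intro q
    refine Integrable.of_bound (by fun_prop) 1 ?_
    filter_upwards [hμ] with x hx
    rw [Real.norm_of_nonneg (pow_nonneg hx.1 _)]
    exact pow_le_one₀ hx.1 hx.2.le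
  have hI : ∀ r : ℝ, Integrable ((Ici r).indicator (1 : ℝ → ℝ)) μ := fun r =>
    (integrable_const (1:ℝ)).indicator measurableSet_Ici
  rw [← integral_indicator_one measurableSet_Ici, ← integral_const_mul]
  refine integral_mono_ae ((hI r).const_mul _) (hi _) ?_
  filter_upwards [hμ] with u hu
  by_cases h : r ≤ u
  · simp [indicator, h]
    exact pow_le_pow_left₀ hr h _
  · simp [indicator, h]
    exact pow_nonneg hu.1 _

/-- transfer from the weight to a measure -/
lemma aux_transfer (ω : ℝ → ℝ)
    (hnn : ∀ t ∈ Ico (0:ℝ) 1, 0 ≤ ω t)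
    (hint : IntegrableOn ω (Ico (0:ℝ) 1)) :
    ∃ μ : Measure ℝ, IsFiniteMeasure μ ∧ (∀ᵐ x ∂μ, x ∈ Ico (0:ℝ) 1) ∧
      (∀ r ∈ Ico (0:ℝ) 1, μ.real (Ici r) = tl ω r) ∧
      (∀ q : ℕ, momR ω q = ∫ u, u ^ q ∂μ) := by
  have hae : AEMeasurable (fun x => ENNReal.ofReal (ω x)) (volume.restrict (Ico (0:ℝ) 1)) :=
    hint.aestronglyMeasurable.aemeasurable.ennreal_ofReal
  have hfin : IsFiniteMeasure ((volume.restrict (Ico (0:ℝ) 1)).withDensity (fun x => ENNReal.ofReal (ω x))) :=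
    isFiniteMeasure_withDensity_ofReal hint.2
  have hmem : ∀ᵐ x ∂((volume.restrict (Ico (0:ℝ) 1)).withDensity (fun x => ENNReal.ofReal (ω x))),
      x ∈ Ico (0:ℝ) 1 :=
    (withDensity_absolutelyContinuous _ _) (ae_restrict_mem measurableSet_Ico)
  have hgen : ∀ f : ℝ → ℝ, ∫ x, f x ∂((volume.restrict (Ico (0:ℝ) 1)).withDensity (fun x => ENNReal.ofReal (ω x)))
      = ∫ x in Ico (0:ℝ) 1, f x * ω x := by
    intro f
    rw [integral_withDensity_eq_integral_toReal_smul₀ hae (by simp)]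
    refine setIntegral_congr_fun measurableSet_Ico ?_
    intro x hx
    simp [ENNReal.toReal_ofReal (hnn x hx), mul_comm]
  refine ⟨_, hfin, hmem, ?_, ?_⟩
  · intro r hr
    rw [← integral_indicator_one measurableSet_Ici, hgen, tl,
      intervalIntegral.integral_of_le hr.2.le, ← integral_Ico_eq_integral_Ioc]
    have : ∀ x, (Ici r).indicator (1 : ℝ → ℝ) x * ω x = (Ici r).indicator ω x := by
      intro x; by_cases h : r ≤ x <;> simp [indicator, h]
    simp_rw [this]
    rw [setIntegral_indicator measurableSet_Ici]
    congr 2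
    ext x
    simp only [mem_inter_iff, mem_Ico, mem_Ici]
    constructor
    · rintro ⟨⟨_, h⟩, h'⟩; exact ⟨h', h⟩
    · rintro ⟨h', h⟩; exact ⟨⟨hr.1.trans h', h⟩, h'⟩
  · intro q
    rw [hgen, momR, intervalIntegral.integral_of_le zero_le_one, ← integral_Ico_eq_integral_Ioc]
    simp only [Real.rpow_natCast]

lemma aux_point (m : ℕ → ℝ) (T : ℝ → ℝ) (C : ℝ) (hC : 1 ≤ C) (x : ℝ) (hx : x ∈ Ico (0:ℝ) 1)
    (hpos : ∀ r ∈ Ico (0:ℝ) 1, 0 < (T r : ℝ))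
    (hd : ∀ r ∈ Ico (0:ℝ) 1, T r ≤ C * T ((1 + r) / 2))
    (hlow : ∀ (q : ℕ), ∀ r ∈ Ico (0:ℝ) 1, r ^ q * T r ≤ m q)
    (hup : ∀ p : ℕ, p ≠ 0 → C * x ^ p ≤ 1 / 2 → m (2 * p + 1) ≤ 2 * T x) :
    Summable (fun n : ℕ => x ^ (n + 1) / (2 * m (2 * n + 3))) ∧
    1 / (2 * m 1) + ∑' n : ℕ, x ^ (n + 1) / (2 * m (2 * n + 3)) ≤
      4 / 3 * C ^ 2 * (1 / (T x * (1 - x))) ∧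
    x / (8 * C) * (1 / (T x * (1 - x))) ≤ ∑' n : ℕ, x ^ (n + 1) / (2 * m (2 * n + 3)) := by
  obtain ⟨hx0, hx1⟩ := hx
  have hTx := hpos x ⟨hx0, hx1⟩
  have hδ : 0 < 1 - x := by linarith
  have hm : ∀ q, 0 < m q := fun q =>
    lt_of_lt_of_le (mul_pos (pow_pos (by norm_num) q) (hpos (1/2) ⟨by norm_num, by norm_num⟩))
      (hlow q (1/2) ⟨by norm_num, by norm_num⟩)
  obtain ⟨r, hr⟩ : ∃ r, r = (3 + x) / 4 := ⟨_, rfl⟩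
  have hr0 : 3 / 4 ≤ r := by linarith
  have hr1 : r < 1 := by linarith
  have hTr := hpos r ⟨by linarith, hr1⟩
  have hT : T x ≤ C ^ 2 * T r := by
    have h1 := hd x ⟨hx0, hx1⟩
    have h2 := hd ((1 + x) / 2) ⟨by linarith, by linarith⟩
    have h3 : (1 + (1 + x) / 2) / 2 = r := by rw [hr]; ring
    rw [h3] at h2
    nlinarith
  have hq0 : 0 ≤ x / r ^ 2 := by positivity
  have hq1 : x / r ^ 2 ≤ 1 - (1 - x) / 2 := by
    rw [div_le_iff₀ (by positivity), hr]
    nlinarith [mul_nonneg hx0 hδ.le, mul_nonneg (mul_nonneg hx0 hδ.le) hx0]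
  have hq2 : x / r ^ 2 < 1 := by linarith
  have hterm : ∀ n : ℕ, x ^ n / (2 * m (2 * n + 1)) ≤ 1 / (2 * r * T r) * (x / r ^ 2) ^ n := by
    intro n
    have h := hlow (2 * n + 1) r ⟨by linarith, hr1⟩
    have h1 : 1 / (2 * r * T r) * (x / r ^ 2) ^ n = x ^ n / (2 * (r ^ (2 * n + 1) * T r)) := by
      rw [div_pow, ← pow_mul, pow_succ]
      field_simp
    rw [h1]
    gcongr
  have hgeo := (summable_geometric_of_lt_one hq0 hq2).mul_left (1 / (2 * r * T r))
  have hs : Summable (fun n : ℕ => x ^ n / (2 * m (2 * n + 1))) :=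
    Summable.of_nonneg_of_le (fun n => div_nonneg (pow_nonneg hx0 _) (by linarith [hm (2 * n + 1)]))
      hterm hgeo
  have hs' : Summable (fun n : ℕ => x ^ (n + 1) / (2 * m (2 * n + 3))) :=
    (summable_nat_add_iff 1).2 hs
  refine ⟨hs', ?_, ?_⟩
  · have h0 : 1 / (2 * m 1) + ∑' n : ℕ, x ^ (n + 1) / (2 * m (2 * n + 3)) =
        ∑' n : ℕ, x ^ n / (2 * m (2 * n + 1)) := by
      rw [hs.tsum_eq_zero_add]
      simp only [pow_zero, mul_zero, zero_add]
      rfl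
    rw [h0]
    refine (hs.tsum_le_tsum hterm hgeo).trans ?_
    rw [tsum_mul_left, tsum_geometric_of_lt_one hq0 hq2]
    have h1 : (1 - x / r ^ 2)⁻¹ ≤ 2 / (1 - x) := by
      rw [inv_le_comm₀ (by linarith) (by positivity), inv_div]
      linarith
    have h2 : 1 / (2 * r * T r) ≤ 2 / 3 * C ^ 2 / T x := by
      rw [div_le_div_iff₀ (by positivity) hTx]
      nlinarith [mul_pos (pow_pos (by linarith : 0 < C) 2) hTr]
    calc _ ≤ (2 / 3 * C ^ 2 / T x) * (2 / (1 - x)) :=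
          mul_le_mul h2 h1 (inv_nonneg.2 (by linarith)) (by positivity)
      _ = _ := by field_simp; ring
  · have hC0 : 0 < C := by linarith
    have hex : ∃ N : ℕ, C * x ^ N ≤ 1 / 2 := by
      obtain ⟨N, hN⟩ := exists_pow_lt_of_lt_one (show 0 < 1 / (2 * C) by positivity) hx1
      refine ⟨N, ?_⟩
      rw [lt_div_iff₀ (by positivity)] at hN
      linarith
    classical
    have hN := Nat.find_spec hex
    have hmin := fun k => @Nat.find_min _ _ hex k
    generalize Nat.find hex = N at hN hmin
    obtain _ | k := N
    · simp at hN; linarith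
    have hk := hmin k (Nat.lt_succ_self k)
    push Not at hk
    have hge : ∀ n : ℕ, x ^ (k + 1) / (4 * T x) * x ^ n ≤
        x ^ (n + k + 1) / (2 * m (2 * (n + k) + 3)) := by
      intro n
      have h1 : C * x ^ (n + k + 1) ≤ 1 / 2 := by
        refine le_trans ?_ hN
        gcongr C * ?_
        exact pow_le_pow_of_le_one hx0 hx1.le (by omega)
      have h2 := hup (n + k + 1) (by omega) h1
      have h3 : 2 * (n + k + 1) + 1 = 2 * (n + k) + 3 := by ring
      rw [h3] at h2
      have h4 : x ^ (k + 1) / (4 * T x) * x ^ n = x ^ (n + k + 1) / (4 * T x) := by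
        rw [div_mul_eq_mul_div, ← pow_add]; congr 2; ring
      rw [h4]
      have := hm (2 * (n + k) + 3)
      apply div_le_div_of_nonneg_left (by positivity) (by positivity) (by linarith)
    have h5 : ∑' n : ℕ, x ^ (k + 1) / (4 * T x) * x ^ n ≤
        ∑' n : ℕ, x ^ (n + k + 1) / (2 * m (2 * (n + k) + 3)) :=
      Summable.tsum_le_tsum hge ((summable_geometric_of_lt_one hx0 hx1).mul_left _)
        ((summable_nat_add_iff k).2 hs')
    have h6 := hs'.sum_add_tsum_nat_add k
    have h7 : 0 ≤ ∑ n ∈ Finset.range k, x ^ (n + 1) / (2 * m (2 * n + 3)) :=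
      Finset.sum_nonneg fun n _ => div_nonneg (pow_nonneg hx0 _) (by linarith [hm (2 * n + 3)])
    rw [tsum_mul_left, tsum_geometric_of_lt_one hx0 hx1] at h5
    have h8 : x / (8 * C) * (1 / (T x * (1 - x))) ≤ x ^ (k + 1) / (4 * T x) * (1 - x)⁻¹ := by
      have h9 : x / (2 * C) ≤ x ^ (k + 1) := by
        rw [div_le_iff₀ (by positivity), pow_succ]
        nlinarith
      calc _ = (x / (2 * C)) / (4 * T x) * (1 - x)⁻¹ := by field_simp; ring
        _ ≤ _ := by gcongr
    linarith

theorem stmt4 (ω : ℝ → ℝ)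
    (hnn : ∀ t ∈ Ico (0:ℝ) 1, 0 ≤ ω t)
    (hint : IntegrableOn ω (Ico (0:ℝ) 1))
    (hpos : ∀ r ∈ Ico (0:ℝ) 1, 0 < tl ω r)
    (C : ℝ) (hC : 1 ≤ C)
    (hdbl : ∀ r ∈ Ico (0:ℝ) 1, tl ω r ≤ C * tl ω ((1 + r) / 2)) :
    ∃ c₁ > (0:ℝ), ∃ c₂ > (0:ℝ), ∀ s t : ℝ, 0 ≤ s → s < 1 → 0 ≤ t → t < 1 →
      c₁ * (1 + ∫ x in (0:ℝ)..(s*t), 1 / (tl ω x * (1 - x))) ≤ Kker ω s t ∧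
      Kker ω s t ≤ c₂ * (1 + ∫ x in (0:ℝ)..(s*t), 1 / (tl ω x * (1 - x))) := by
  obtain ⟨μ, hfin, hμ, hT, hM⟩ := aux_transfer ω hnn hint
  have hC0 : 0 < C := by linarith
  have hd : ∀ r ∈ Ico (0:ℝ) 1, μ.real (Ici r) ≤ C * μ.real (Ici ((1 + r) / 2)) := by
    intro r hr
    rw [hT r hr, hT _ ⟨by linarith [hr.1], by linarith [hr.2]⟩]
    exact hdbl r hr
  obtain ⟨m, hm⟩ : ∃ m : ℕ → ℝ, ∀ q, m q = ∫ u, u ^ q ∂μ := ⟨_, fun _ => rfl⟩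
  have hlow : ∀ (q : ℕ), ∀ r ∈ Ico (0:ℝ) 1, r ^ q * tl ω r ≤ m q := by
    intro q r hr
    rw [hm, ← hT r hr]
    exact aux_le_mom μ hμ q r hr.1
  have hP := fun (x : ℝ) (hx : x ∈ Ico (0:ℝ) 1) => aux_point m (tl ω) C hC x hx hpos hdbl hlow (by
    intro p hp h
    rw [hm, ← hT x hx]
    exact aux_mom_le μ hμ C hC hd p hp x hx h)
  have hmpos : ∀ q, 0 < m q := fun q =>
    lt_of_lt_of_le (mul_pos (pow_pos (by norm_num) q) (hpos (1/2) ⟨by norm_num, by norm_num⟩))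
      (hlow q (1/2) ⟨by norm_num, by norm_num⟩)
  have hM1 : momR ω 1 = m 1 := by rw [hm, ← hM]; simp
  have hM3 : ∀ n : ℕ, momR ω (2 * (n:ℝ) + 3) = m (2 * n + 3) := by
    intro n; rw [hm, ← hM]; push_cast; rfl
  -- the comparison function
  obtain ⟨g, hg⟩ : ∃ g : ℝ → ℝ, g = fun x => 1 / (tl ω x * (1 - x)) := ⟨_, rfl⟩
  obtain ⟨S, hS⟩ : ∃ S : ℝ → ℝ, S = fun x => ∑' n : ℕ, x ^ (n + 1) / (2 * m (2 * n + 3)) :=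
    ⟨_, rfl⟩
  obtain ⟨b, hb⟩ : ∃ b : ℝ, b = 1 / (2 * m 1) := ⟨_, rfl⟩
  have hb0 : 0 < b := by rw [hb]; have := hmpos 1; positivity
  have hgpos : ∀ x ∈ Ico (0:ℝ) 1, 0 < g x := by
    intro x hx
    have := hpos x hx
    have h2 : 0 < 1 - x := by linarith [hx.2]
    rw [hg]; positivity
  have hTanti : AntitoneOn (tl ω) (Ico 0 1) := by
    intro x hx y hy hxy
    rw [← hT x hx, ← hT y hy]
    exact measureReal_mono (Ici_subset_Ici.2 hxy)
  have hgmono : MonotoneOn g (Ico 0 1) := by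
    intro x hx y hy hxy
    have h1 := hpos y hy
    have h2 : 0 < 1 - y := by linarith [hy.2]
    have h3 := hTanti hx hy hxy
    rw [hg]
    simp only
    apply one_div_le_one_div_of_le (by positivity)
    exact mul_le_mul h3 (by linarith) h2.le (by linarith)
  have hSmono : MonotoneOn S (Ico 0 1) := by
    intro x hx y hy hxy
    rw [hS]
    refine Summable.tsum_le_tsum (fun n => ?_) (hP x hx).1 (hP y hy).1
    have := hmpos (2 * n + 3)
    have := hx.1
    gcongr
  have hhalf : (1/2 : ℝ) ∈ Ico (0:ℝ) 1 := ⟨by norm_num, by norm_num⟩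
  have hzero : (0 : ℝ) ∈ Ico (0:ℝ) 1 := ⟨by norm_num, by norm_num⟩
  have hgh := hgpos _ hhalf
  have hg0 := hgpos _ hzero
  obtain ⟨c, hc0, hcl⟩ : ∃ c : ℝ, 0 < c ∧ ∀ x ∈ Ico (0:ℝ) 1, c * g x ≤ b + S x := by
    refine ⟨min (1 / (16 * C)) (b / g (1/2)), by positivity, ?_⟩
    intro x hx
    have hgx := hgpos x hx
    have hl : x / (8 * C) * g x ≤ S x := by rw [hg, hS]; exact (hP x hx).2.2
    rcases le_total (1/2) x with h | h
    · calc _ ≤ 1 / (16 * C) * g x := by gcongr; exact min_le_left _ _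
        _ ≤ x / (8 * C) * g x := by
          gcongr ?_ * _
          rw [div_le_div_iff₀ (by positivity) (by positivity)]
          nlinarith
        _ ≤ _ := by linarith
    · have hS0 : 0 ≤ S x := le_trans (by have := hx.1; positivity) hl
      calc _ ≤ b / g (1/2) * g x := by gcongr; exact min_le_right _ _
        _ ≤ b / g (1/2) * g (1/2) := by gcongr; exact hgmono hx hhalf h
        _ = b := by field_simp
        _ ≤ _ := by linarith
  obtain ⟨d, hd0, hdu⟩ : ∃ d : ℝ, 0 < d ∧ ∀ x ∈ Ico (0:ℝ) 1, b + S x ≤ d * g x :=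
    ⟨4 / 3 * C ^ 2, by positivity, fun x hx => by rw [hg, hS, hb]; exact (hP x hx).2.1⟩
  refine ⟨min b (c * min (1/2) (g 0 / 2)), by positivity, max b (d * max 2 (g (1/2))),
    lt_of_lt_of_le hb0 (le_max_left _ _), ?_⟩
  intro s t hs0 hs1 ht0 ht1
  have hg' : (fun x => 1 / (tl ω x * (1 - x))) = g := hg.symm
  rw [show (∫ x in (0:ℝ)..(s*t), 1 / (tl ω x * (1 - x))) = ∫ x in (0:ℝ)..(s*t), g x by rw [hg]]
  have hK : Kker ω s t = if t = 0 then b else b + (1 / t) * ∫ x in (0:ℝ)..t, S (s * x) := by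
    rw [Kker, hM1, hb, hS]
    simp only [hM3, mul_pow]
  rw [hK]
  rcases ht0.eq_or_lt with rfl | ht
  · simp
  rw [if_neg ht.ne']
  have hsx : ∀ x ∈ Icc 0 t, s * x ∈ Ico (0:ℝ) 1 := fun x hx =>
    ⟨mul_nonneg hs0 hx.1, by nlinarith [hx.1, hx.2]⟩
  have hy : s * t ∈ Ico (0:ℝ) 1 := hsx t ⟨ht.le, le_rfl⟩
  have hSi : IntervalIntegrable (fun x => S (s * x)) volume 0 t := by
    apply MonotoneOn.intervalIntegrable
    rw [uIcc_of_le ht.le]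
    intro x hx y hy hxy
    exact hSmono (hsx x hx) (hsx y hy) (mul_le_mul_of_nonneg_left hxy hs0)
  have hgi : IntervalIntegrable (fun x => g (s * x)) volume 0 t := by
    apply MonotoneOn.intervalIntegrable
    rw [uIcc_of_le ht.le]
    intro x hx y hy hxy
    exact hgmono (hsx x hx) (hsx y hy) (mul_le_mul_of_nonneg_left hxy hs0)
  have hbS : b + (1 / t) * ∫ x in (0:ℝ)..t, S (s * x) =
      (1 / t) * ∫ x in (0:ℝ)..t, (b + S (s * x)) := by
    rw [intervalIntegral.integral_add (by simp) hSi]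
    simp
    field_simp
  rw [hbS]
  obtain ⟨A, hA⟩ : ∃ A : ℝ, A = (1 / t) * ∫ x in (0:ℝ)..t, g (s * x) := ⟨_, rfl⟩
  have hAl : c * A ≤ (1 / t) * ∫ x in (0:ℝ)..t, (b + S (s * x)) := by
    rw [hA, mul_left_comm c, ← intervalIntegral.integral_const_mul c]
    refine mul_le_mul_of_nonneg_left ?_ (by positivity)
    exact intervalIntegral.integral_mono_on ht.le (hgi.const_mul _) ((by simp : IntervalIntegrable (fun _ => b) volume 0 t).add hSi)
      (fun x hx => hcl _ (hsx x hx))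
  have hAu : (1 / t) * ∫ x in (0:ℝ)..t, (b + S (s * x)) ≤ d * A := by
    rw [hA, mul_left_comm d, ← intervalIntegral.integral_const_mul d]
    refine mul_le_mul_of_nonneg_left ?_ (by positivity)
    exact intervalIntegral.integral_mono_on ht.le ((by simp : IntervalIntegrable (fun _ => b) volume 0 t).add hSi)
      (hgi.const_mul _) (fun x hx => hdu _ (hsx x hx))
  have hA0 : g 0 ≤ A := by
    have h := intervalIntegral.integral_mono_on ht.le (by simp : IntervalIntegrable (fun _ => g 0) volume 0 t) hgi
      (fun x hx => hgmono hzero (hsx x hx) (hsx x hx).1)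
    simp at h
    rw [hA, one_div, inv_mul_eq_div, le_div_iff₀ ht]
    linarith
  have hA1 : A ≤ g (s * t) := by
    have h := intervalIntegral.integral_mono_on ht.le hgi (by simp : IntervalIntegrable (fun _ => g (s * t)) volume 0 t)
      (fun x hx => hgmono (hsx x hx) hy (mul_le_mul_of_nonneg_left hx.2 hs0))
    simp at h
    rw [hA, one_div, inv_mul_eq_div, div_le_iff₀ ht]
    linarith
  have hI : ∫ x in (0:ℝ)..(s*t), g x = s * t * A := by
    have h := intervalIntegral.mul_integral_comp_mul_left (a := 0) (b := t) (f := g) s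
    rw [mul_zero] at h
    rw [← h, hA]
    field_simp
  rw [hI]
  have hyA : 0 ≤ s * t * A := mul_nonneg hy.1 (by linarith)
  constructor
  · refine le_trans ?_ hAl
    calc _ ≤ (c * min (1/2) (g 0 / 2)) * (1 + s * t * A) := by
          gcongr; exact min_le_right _ _
      _ = c * (min (1/2) (g 0 / 2) * 1 + min (1/2) (g 0 / 2) * (s * t * A)) := by ring
      _ ≤ c * (g 0 / 2 * 1 + 1 / 2 * (s * t * A)) := by
          gcongr
          · exact min_le_right _ _
          · exact min_le_left _ _
      _ ≤ c * A := by
          gcongr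
          nlinarith [hy.2]
  · refine hAu.trans ?_
    calc d * A ≤ d * (g (1/2) * 1 + 2 * (s * t * A)) := by
          gcongr
          rcases le_total (1/2) (s * t) with h | h
          · nlinarith
          · have := hgmono hy hhalf h
            linarith
      _ ≤ d * (max 2 (g (1/2)) * 1 + max 2 (g (1/2)) * (s * t * A)) := by
          gcongr
          · exact le_max_right _ _
          · exact le_max_left _ _
      _ = (d * max 2 (g (1/2))) * (1 + s * t * A) := by ring
      _ ≤ _ := by gcongr; exact le_max_right _ _
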